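/- Let ψ : (0,∞) → ℝ be one of the functions ψ(x) = x², ψ(x) = x^p for some p < 0, or ψ(x) = −log x. Let n ≥ 1 be an integer and θ ∈ (0, π/2]. Suppose h : C_θ → (0,∞) is a C³ capillary function with τ[h] ≥ 0. Then there exists a compact convex set 𝔖̂ ⊂ {x_{n+1} ≥ 0} with nonempty interior such that Ω := 𝔖̂ ∩ {x_{n+1} = 0} has nonempty interior relative to the hyperplane {x_{n+1} = 0} and h(ζ) = h_{𝔖̂}(ζ + cos θ E_{n+1}) for all ζ ∈ C_θ. Moreover there is a unique point z in the relative interior of Ω such that ∫_{C_θ} ψ'(h(ζ) − ⟨ζ, z⟩) ζ_i dσ(ζ) = 0 for all i = 1,…,n, and h(ζ) − ⟨ζ, z⟩ > 0 for all ζ ∈ C_θ. -/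

import Mathlib

open MeasureTheory Real Set
open scoped RealInnerProductSpace

noncomputable section

abbrev V (n : ℕ) := EuclideanSpace ℝ (Fin (n + 1))

/-- The vertical unit vector `E_{n+1}`. -/
def Etop (n : ℕ) : V n := EuclideanSpace.single (Fin.last n) 1

/-- The spherical cap `S^n_θ`. -/
def sphCap (n : ℕ) (θ : ℝ) : Set (V n) :=
  {u | ‖u‖ = 1 ∧ Real.cos θ ≤ u (Fin.last n)}

/-- The boundary circle `∂S^n_θ`. -/
def sphCapBdry (n : ℕ) (θ : ℝ) : Set (V n) :=
  {u | ‖u‖ = 1 ∧ u (Fin.last n) = Real.cos θ}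

/-- The capillary cap `C_θ`. -/
def capCap (n : ℕ) (θ : ℝ) : Set (V n) :=
  {ζ | 0 ≤ ζ (Fin.last n) ∧ ‖ζ + Real.cos θ • Etop n‖ = 1}

/-- The open cone over `S^n_θ`. -/
def coneCap (n : ℕ) (θ : ℝ) : Set (V n) :=
  {x | ∃ l : ℝ, 0 < l ∧ ∃ u ∈ sphCap n θ, x = l • u}

/-- `G` is a positively 1-homogeneous extension of `g : C_θ → ℝ` which is `C^m` on an
open neighborhood of the cone over `S^n_θ`. -/
def IsHomExt (n : ℕ) (θ : ℝ) (m : ℕ∞) (g G : V n → ℝ) : Prop :=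
  (∃ U : Set (V n), IsOpen U ∧ coneCap n θ ⊆ U ∧ ContDiffOn ℝ m G U) ∧
  (∀ l : ℝ, 0 < l → ∀ u ∈ sphCap n θ, G (l • u) = l * G u) ∧
  (∀ ζ ∈ capCap n θ, G (ζ + Real.cos θ • Etop n) = g ζ)

/-- The Hessian of `G` at `u` as a quadratic/bilinear form. -/
def hessQ (n : ℕ) (G : V n → ℝ) (u v w : V n) : ℝ :=
  fderiv ℝ (fderiv ℝ G) u v w

/-- The Hessian matrix `D²G(u)` in the standard coordinates. -/
def hessM (n : ℕ) (G : V n → ℝ) (u : V n) : Matrix (Fin (n + 1)) (Fin (n + 1)) ℝ :=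
  fun i j => fderiv ℝ (fderiv ℝ G) u (EuclideanSpace.single i 1) (EuclideanSpace.single j 1)

/-- `σ_j` of the eigenvalues of `D²G(u)` (via characteristic polynomial coefficients). -/
def sigmaElem (n : ℕ) (j : ℕ) (G : V n → ℝ) (u : V n) : ℝ :=
  (-1 : ℝ) ^ j * ((hessM n G u).charpoly.coeff (n + 1 - j))

/-- `τ[g] ≥ 0` : the Hessian of the extension is positive semidefinite on `S^n_θ`. -/
def TauNonneg (n : ℕ) (θ : ℝ) (G : V n → ℝ) : Prop :=
  ∀ u ∈ sphCap n θ, ∀ v : V n, 0 ≤ hessQ n G u v v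

/-- `τ[g] > 0`. -/
def TauPos (n : ℕ) (θ : ℝ) (G : V n → ℝ) : Prop :=
  TauNonneg n θ G ∧
  ∀ u ∈ sphCap n θ, ∀ v : V n, v ≠ 0 → ⟪v, u⟫ = 0 → 0 < hessQ n G u v v

/-- Capillary (Robin) boundary condition: `∂_{n+1}G = 0` on `∂S^n_θ`. -/
def IsCapillaryF (n : ℕ) (θ : ℝ) (G : V n → ℝ) : Prop :=
  ∀ u ∈ sphCapBdry n θ, fderiv ℝ G u (Etop n) = 0

/-- Reflection negating the horizontal coordinates. -/
def horizNeg (n : ℕ) (ζ : V n) : V n := (2 * ζ (Fin.last n)) • Etop n - ζ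

/-- Support function of a set. -/
def suppFn (n : ℕ) (K : Set (V n)) (u : V n) : ℝ := sSup ((fun y => ⟪u, y⟫) '' K)

/-- Relative interior (within the hyperplane `{x_{n+1}=0}`) of the base `K ∩ {x_{n+1}=0}`. -/
def relintBase (n : ℕ) (K : Set (V n)) : Set (V n) :=
  {x | x (Fin.last n) = 0 ∧ ∃ ε > 0, ∀ y : V n, y (Fin.last n) = 0 → ‖y - x‖ < ε → y ∈ K}

/-- A `θ`-capillary convex body. -/
def IsCapBody (n : ℕ) (θ : ℝ) (K : Set (V n)) : Prop :=
  IsCompact K ∧ Convex ℝ K ∧ (interior K).Nonempty ∧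
  (∀ x ∈ K, 0 ≤ x (Fin.last n)) ∧
  (∀ x ∈ K, 0 < x (Fin.last n) → ∀ u : V n, ‖u‖ = 1 → ⟪u, x⟫ = suppFn n K u →
    Real.cos θ ≤ u (Fin.last n)) ∧
  (∀ v : V n, ‖v‖ = 1 → v (Fin.last n) = 0 →
    suppFn n K (Real.sin θ • v + Real.cos θ • Etop n) = Real.sin θ * suppFn n K v) ∧
  (relintBase n K).Nonempty

/-- `ψ` is one of `x²`, `x^p (p<0)`, `-log x`. -/
def PsiOK (ψ : ℝ → ℝ) : Prop :=
  (ψ = fun x : ℝ => x ^ 2) ∨ (∃ p : ℝ, p < 0 ∧ ψ = fun x : ℝ => x ^ p) ∨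
    (ψ = fun x : ℝ => -Real.log x)


section Cap

variable {n : ℕ} {θ : ℝ}

@[simp]
theorem inner_Etop (x : V n) : ⟪x, Etop n⟫ = x (Fin.last n) := by
  simp [Etop, EuclideanSpace.inner_single_right]

@[simp]
theorem Etop_apply_last : Etop n (Fin.last n) = 1 := by simp [Etop]

@[simp]
theorem norm_Etop : ‖Etop n‖ = 1 := by simp [Etop]

theorem inner_Etop_left (x : V n) : ⟪Etop n, x⟫ = x (Fin.last n) := by
  rw [real_inner_comm, inner_Etop]

theorem norm_sq_eq_sum_castSucc (x : V n) :
    ‖x‖ ^ 2 = ∑ i : Fin n, x i.castSucc ^ 2 + x (Fin.last n) ^ 2 := by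
  rw [EuclideanSpace.real_norm_sq_eq, Fin.sum_univ_castSucc]

theorem cos_nonneg_of_mem (hθ : θ ∈ Ioc 0 (π / 2)) : 0 ≤ cos θ :=
  cos_nonneg_of_mem_Icc ⟨by linarith [hθ.1, pi_pos], hθ.2⟩

theorem sin_pos_of_mem (hθ : θ ∈ Ioc 0 (π / 2)) : 0 < sin θ :=
  sin_pos_of_pos_of_lt_pi hθ.1 (by linarith [hθ.2, pi_pos])

theorem mem_capCap_iff (ζ : V n) : ζ ∈ capCap n θ ↔ ζ + cos θ • Etop n ∈ sphCap n θ := by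
  simp [capCap, sphCap, and_comm]

theorem sub_mem_capCap {u : V n} (hu : u ∈ sphCap n θ) : u - cos θ • Etop n ∈ capCap n θ := by
  rw [mem_capCap_iff]; simpa using hu

theorem continuous_apply_coord (i : Fin (n + 1)) : Continuous fun x : V n => x i :=
  (EuclideanSpace.proj i : V n →L[ℝ] ℝ).continuous

theorem isCompact_sphCap : IsCompact (sphCap n θ) := by
  have h : IsClosed {u : V n | cos θ ≤ u (Fin.last n)} :=
    isClosed_le continuous_const (continuous_apply_coord _)
  have he : sphCap n θ = Metric.sphere 0 1 ∩ {u : V n | cos θ ≤ u (Fin.last n)} := by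
    ext u; simp [sphCap]
  exact he ▸ (isCompact_sphere (0 : V n) 1).inter_right h

theorem isCompact_capCap : IsCompact (capCap n θ) := by
  have : capCap n θ = (fun u => u - cos θ • Etop n) '' sphCap n θ := by
    ext ζ
    constructor
    · intro h
      exact ⟨ζ + cos θ • Etop n, (mem_capCap_iff ζ).1 h, by simp⟩
    · rintro ⟨u, hu, rfl⟩
      exact sub_mem_capCap hu
  rw [this]
  exact isCompact_sphCap.image (by fun_prop)

theorem measurableSet_capCap : MeasurableSet (capCap n θ) := isCompact_capCap.measurableSet

theorem Etop_mem_sphCap : Etop n ∈ sphCap n θ := by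
  simp [sphCap, cos_le_one]

/-- The inverse stereographic projection from the south pole. -/
def invStereo (n : ℕ) (x : Fin n → ℝ) : V n :=
  WithLp.toLp 2 (Fin.snoc (fun i => 2 * x i / (1 + ∑ j, x j ^ 2))
    ((1 - ∑ j, x j ^ 2) / (1 + ∑ j, x j ^ 2)) : Fin (n + 1) → ℝ)

theorem contDiff_invStereo : ContDiff ℝ 1 (invStereo n) := by
  have h0 : ∀ x : Fin n → ℝ, 1 + ∑ j, x j ^ 2 ≠ 0 := fun x => by positivity
  rw [contDiff_euclidean]
  intro i
  refine Fin.lastCases ?_ (fun i => ?_) i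
  · simp only [invStereo, Fin.snoc_last]
    exact ContDiff.div (by fun_prop) (by fun_prop) h0
  · simp only [invStereo, Fin.snoc_castSucc]
    exact ContDiff.div (by fun_prop) (by fun_prop) h0

theorem mem_image_invStereo {u : V n} (hu : ‖u‖ = 1) (hl : 0 ≤ u (Fin.last n)) :
    u ∈ invStereo n '' Metric.closedBall 0 1 := by
  have hs := norm_sq_eq_sum_castSucc u
  rw [hu] at hs
  set b := u (Fin.last n) with hb
  have hb1 : 0 < 1 + b := by linarith
  have hsum : ∑ j : Fin n, (u j.castSucc / (1 + b)) ^ 2 = (1 - b) / (1 + b) := by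
    simp_rw [div_pow]
    rw [← Finset.sum_div, show ∑ i : Fin n, u i.castSucc ^ 2 = (1 - b) * (1 + b) by linarith]
    field_simp
  refine ⟨fun i => u i.castSucc / (1 + b), ?_, ?_⟩
  · rw [mem_closedBall_zero_iff, pi_norm_le_iff_of_nonneg zero_le_one]
    intro i
    rw [Real.norm_eq_abs, abs_div, abs_of_pos hb1, div_le_one hb1]
    have h1 : u i.castSucc ^ 2 ≤ ∑ i : Fin n, u i.castSucc ^ 2 :=
      Finset.single_le_sum (f := fun i : Fin n => u i.castSucc ^ 2)
        (fun _ _ => sq_nonneg _) (Finset.mem_univ i)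
    exact abs_le_of_sq_le_sq (by nlinarith) hb1.le
  · ext i
    refine Fin.lastCases ?_ (fun i => ?_) i
    · simp only [invStereo, Fin.snoc_last, hsum]
      rw [← hb]; field_simp; ring
    · simp only [invStereo, Fin.snoc_castSucc, hsum]
      field_simp; ring

theorem hausdorffMeasure_capCap_lt_top (hc : 0 ≤ cos θ) : μH[(n : ℝ)] (capCap n θ) < ⊤ := by
  have hcv : Convex ℝ (Metric.closedBall (0 : Fin n → ℝ) 1) := convex_closedBall _ _
  obtain ⟨C, hC⟩ := (contDiff_invStereo (n := n)).contDiffOn.exists_lipschitzOnWith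
    one_ne_zero hcv (isCompact_closedBall (0 : Fin n → ℝ) 1)
  have hsub : capCap n θ ⊆
      (fun u => u - cos θ • Etop n) '' (invStereo n '' Metric.closedBall 0 1) := by
    intro ζ hζ
    have hu := (mem_capCap_iff ζ).1 hζ
    exact ⟨_, mem_image_invStereo hu.1 (hc.trans hu.2), by simp⟩
  have hiso : LipschitzWith 1 (fun u : V n => u - cos θ • Etop n) :=
    (IsometryEquiv.subRight (cos θ • Etop n)).isometry.lipschitz
  have hvol : μH[(n : ℝ)] (Metric.closedBall (0 : Fin n → ℝ) 1) < ⊤ := by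
    have := @hausdorffMeasure_pi_real (Fin n) _
    rw [Fintype.card_fin] at this
    rw [this]
    exact measure_closedBall_lt_top
  refine (measure_mono hsub).trans_lt ?_
  refine (hiso.hausdorffMeasure_image_le n.cast_nonneg _).trans_lt ?_
  refine ENNReal.mul_lt_top (by simp) ?_
  refine (hC.hausdorffMeasure_image_le n.cast_nonneg).trans_lt ?_
  exact ENNReal.mul_lt_top (ENNReal.rpow_lt_top_of_nonneg n.cast_nonneg (by simp)) hvol

/-- The parametrization of `capCap` as a graph over the horizontal disc. -/
def capGraph (n : ℕ) (θ : ℝ) (x : Fin n → ℝ) : V n :=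
  WithLp.toLp 2 (Fin.snoc x (√(1 - ∑ j, x j ^ 2) - cos θ) : Fin (n + 1) → ℝ)

theorem continuous_capGraph : Continuous (capGraph n θ) := by
  refine (PiLp.continuous_toLp 2 _).comp (continuous_pi fun i => ?_)
  refine Fin.lastCases ?_ (fun i => ?_) i
  · simp only [Fin.snoc_last]; fun_prop
  · simp only [Fin.snoc_castSucc]; fun_prop

theorem capGraph_mem_capCap {x : Fin n → ℝ} (hx : ∑ j, x j ^ 2 ≤ sin θ ^ 2) :
    capGraph n θ x ∈ capCap n θ := by
  have h1 : cos θ ^ 2 ≤ 1 - ∑ j, x j ^ 2 := by linarith [sin_sq_add_cos_sq θ]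
  have h2 : cos θ ≤ √(1 - ∑ j, x j ^ 2) := Real.le_sqrt_of_sq_le h1
  rw [mem_capCap_iff]
  refine ⟨?_, by simpa [capGraph] using h2⟩
  rw [← sq_eq_sq₀ (norm_nonneg _) zero_le_one, norm_sq_eq_sum_castSucc]
  have h3 : ∀ i : Fin n, Etop n i.castSucc = 0 := fun i => by simp [Etop, Fin.castSucc_ne_last]
  simp [capGraph, h3, Real.sq_sqrt ((sq_nonneg _).trans h1)]

theorem capGraph_eq (hc : 0 ≤ cos θ) {ζ : V n} (hζ : ζ ∈ capCap n θ) :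
    capGraph n θ (fun i => ζ i.castSucc) = ζ ∧ ∑ j : Fin n, ζ j.castSucc ^ 2 ≤ sin θ ^ 2 := by
  have hu := (mem_capCap_iff ζ).1 hζ
  have hs := norm_sq_eq_sum_castSucc (ζ + cos θ • Etop n)
  have h3 : ∀ i : Fin n, Etop n i.castSucc = 0 := fun i => by simp [Etop, Fin.castSucc_ne_last]
  rw [hu.1] at hs
  simp only [PiLp.add_apply, PiLp.smul_apply, h3, smul_eq_mul, mul_zero, add_zero,
    Etop_apply_last, mul_one] at hs
  have h0 : 0 ≤ ζ (Fin.last n) := hζ.1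
  constructor
  · ext i
    refine Fin.lastCases ?_ (fun i => ?_) i
    · simp only [capGraph, Fin.snoc_last]
      rw [show 1 - ∑ j : Fin n, ζ j.castSucc ^ 2 = (ζ (Fin.last n) + cos θ) ^ 2 by linarith,
        Real.sqrt_sq (by linarith)]
      ring
    · simp [capGraph]
  · nlinarith [sin_sq_add_cos_sq θ]

theorem hausdorffMeasure_inter_capCap_pos (hθ : θ ∈ Ioc 0 (π / 2)) {U : Set (V n)} (hU : IsOpen U)
    {ζ : V n} (hζ : ζ ∈ capCap n θ) (hζU : ζ ∈ U) : 0 < μH[(n : ℝ)] (U ∩ capCap n θ) := by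
  have hc := cos_nonneg_of_mem hθ
  have hsin := sin_pos_of_mem hθ
  obtain ⟨he, hle⟩ := capGraph_eq hc hζ
  set x₀ : Fin n → ℝ := fun i => ζ i.castSucc with hx₀
  set W : Set (Fin n → ℝ) := capGraph n θ ⁻¹' U ∩ {x | ∑ j, x j ^ 2 < sin θ ^ 2} with hW
  have hWo : IsOpen W :=
    (hU.preimage continuous_capGraph).inter (isOpen_lt (by fun_prop) continuous_const)
  have hWne : W.Nonempty := by
    have hcont : Continuous fun s : ℝ => capGraph n θ (s • x₀) :=
      continuous_capGraph.comp (by fun_prop)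
    have hmem : (fun s : ℝ => capGraph n θ (s • x₀)) ⁻¹' U ∈ nhds (1 : ℝ) :=
      (hU.preimage hcont).mem_nhds (by simpa [he] using hζU)
    have hnear : ∀ᶠ s : ℝ in nhdsWithin 1 (Iio 1), s ∈ Ioo (0 : ℝ) 1 :=
      Ioo_mem_nhdsLT zero_lt_one
    obtain ⟨s, hs1, hs2⟩ := (hnear.and (nhdsWithin_le_nhds hmem)).exists
    refine ⟨s • x₀, hs2, ?_⟩
    simp only [mem_ofPred_eq, Pi.smul_apply, smul_eq_mul, mul_pow, ← Finset.mul_sum]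
    have h1 : s ^ 2 < 1 := by nlinarith [hs1.1, hs1.2]
    have h2 : 0 < sin θ ^ 2 := by positivity
    nlinarith [sq_nonneg s]
  have hvol : 0 < μH[(n : ℝ)] W := by
    have := @hausdorffMeasure_pi_real (Fin n) _
    rw [Fintype.card_fin] at this
    rw [this]
    exact hWo.measure_pos _ hWne
  have hlip : LipschitzWith 1 (fun (y : V n) (i : Fin n) => y i.castSucc) := by
    refine LipschitzWith.of_dist_le_mul fun y z => ?_
    rw [NNReal.coe_one, one_mul, dist_pi_le_iff dist_nonneg]
    intro i
    rw [dist_eq_norm, dist_eq_norm]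
    exact PiLp.norm_apply_le (y - z) i.castSucc
  refine hvol.trans_le ?_
  have hsub : W ⊆ (fun (y : V n) (i : Fin n) => y i.castSucc) '' (U ∩ capCap n θ) := by
    intro x hx
    refine ⟨capGraph n θ x, ⟨hx.1, capGraph_mem_capCap (le_of_lt hx.2)⟩, ?_⟩
    ext i; simp [capGraph]
  refine (measure_mono hsub).trans ?_
  simpa using hlip.hausdorffMeasure_image_le n.cast_nonneg (U ∩ capCap n θ)

theorem smul_add_mem_sphCapBdry {e : V n} (he : ‖e‖ = 1)
    (hl : e (Fin.last n) = 0) : sin θ • e + cos θ • Etop n ∈ sphCapBdry n θ := by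
  refine ⟨?_, by simp [hl]⟩
  rw [← sq_eq_sq₀ (norm_nonneg _) zero_le_one, norm_add_sq_real]
  simp [norm_smul, he, inner_smul_left, inner_smul_right, hl, sq_abs]

end Cap

section Gradient

variable {n : ℕ} {θ : ℝ} {h H : V n → ℝ}

theorem sphCap_subset_coneCap : sphCap n θ ⊆ coneCap n θ :=
  fun u hu => ⟨1, one_pos, u, hu, (one_smul ℝ u).symm⟩

theorem IsHomExt.contDiffAt (hext : IsHomExt n θ 3 h H) {u : V n} (hu : u ∈ sphCap n θ) :
    ContDiffAt ℝ 3 H u := by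
  obtain ⟨⟨U, hU, hcU, hH⟩, -⟩ := hext
  exact hH.contDiffAt (hU.mem_nhds (hcU (sphCap_subset_coneCap hu)))

theorem IsHomExt.hasFDerivAt (hext : IsHomExt n θ 3 h H) {u : V n} (hu : u ∈ sphCap n θ) :
    HasFDerivAt H (fderiv ℝ H u) u :=
  ((hext.contDiffAt hu).differentiableAt (by norm_num)).hasFDerivAt

theorem IsHomExt.hasFDerivAt_fderiv (hext : IsHomExt n θ 3 h H) {u : V n} (hu : u ∈ sphCap n θ) :
    HasFDerivAt (fderiv ℝ H) (fderiv ℝ (fderiv ℝ H) u) u :=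
  (((hext.contDiffAt hu).fderiv_right (m := 2) (by norm_num)).differentiableAt
    (by norm_num)).hasFDerivAt

theorem IsHomExt.continuousOn (hext : IsHomExt n θ 3 h H) : ContinuousOn H (sphCap n θ) :=
  fun _ hu => (hext.contDiffAt hu).continuousAt.continuousWithinAt

/-- Euler's identity. -/
theorem IsHomExt.fderiv_self (hext : IsHomExt n θ 3 h H) {u : V n} (hu : u ∈ sphCap n θ) :
    fderiv ℝ H u u = H u := by
  have h1 : HasDerivAt (fun l : ℝ => H (l • u)) (fderiv ℝ H u u) 1 := by
    have h2 : HasDerivAt (fun l : ℝ => l • u) u 1 := by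
      simpa using (hasDerivAt_id (1 : ℝ)).smul_const u
    refine HasFDerivAt.comp_hasDerivAt (1 : ℝ) ?_ h2
    simpa using hext.hasFDerivAt hu
  have h3 : HasDerivAt (fun l : ℝ => l * H u) (H u) 1 := by
    simpa using (hasDerivAt_id (1 : ℝ)).mul_const (H u)
  refine h1.unique (h3.congr_of_eventuallyEq ?_)
  filter_upwards [lt_mem_nhds (zero_lt_one' ℝ)] with l hl using hext.2.1 l hl u hu

/-- The gradient inequality along an arc of a great circle contained in the cap. -/
theorem IsHomExt.fderiv_arc_le (hext : IsHomExt n θ 3 h H) (hτ : TauNonneg n θ H) {u e : V n}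
    {T : ℝ} (hT : T ∈ Icc 0 π) (harc : ∀ t ∈ Icc 0 T, cos t • u + sin t • e ∈ sphCap n θ) :
    fderiv ℝ H u (cos T • u + sin T • e) ≤ H (cos T • u + sin T • e) := by
  set γ : ℝ → V n := fun t => cos t • u + sin t • e with hγ
  set γ' : ℝ → V n := fun t => (-sin t) • u + cos t • e with hγ'
  have d1 : ∀ t, HasDerivAt γ (γ' t) t := fun t =>
    ((hasDerivAt_cos t).smul_const u).add ((hasDerivAt_sin t).smul_const e)
  have d2 : ∀ t, HasDerivAt γ' (-γ t) t := fun t => by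
    refine (((hasDerivAt_sin t).neg.smul_const u).add
      ((hasDerivAt_cos t).smul_const e)).congr_deriv ?_
    simp only [hγ]; module
  set W : ℝ → ℝ := fun t => fderiv ℝ H (γ t) (γ' t) * sin (T - t) + H (γ t) * cos (T - t) with hW
  have dW : ∀ t ∈ Icc 0 T, HasDerivAt W (hessQ n H (γ t) (γ' t) (γ' t) * sin (T - t)) t := by
    intro t ht
    have hm := harc t ht
    have e1 : HasDerivAt (fun t => H (γ t)) (fderiv ℝ H (γ t) (γ' t)) t :=
      (hext.hasFDerivAt hm).comp_hasDerivAt t (d1 t)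
    have e2 : HasDerivAt (fun t => fderiv ℝ H (γ t))
        (fderiv ℝ (fderiv ℝ H) (γ t) (γ' t)) t :=
      (hext.hasFDerivAt_fderiv hm).comp_hasDerivAt t (d1 t)
    have e3 := e2.clm_apply (d2 t)
    have e4 : HasDerivAt (fun t => T - t) (-1) t := by
      simpa using (hasDerivAt_id t).const_sub T
    have e5 := (e3.mul e4.sin).add (e1.mul e4.cos)
    refine e5.congr_deriv ?_
    have := hext.fderiv_self hm
    simp only [map_neg, hessQ]
    rw [this]
    ring
  have hmono : MonotoneOn W (Icc 0 T) := by
    refine monotoneOn_of_hasDerivWithinAt_nonneg (convex_Icc 0 T)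
      (f' := fun t => hessQ n H (γ t) (γ' t) (γ' t) * sin (T - t))
      (fun t ht => (dW t ht).continuousAt.continuousWithinAt)
      (fun t ht => (dW t (interior_subset ht)).hasDerivWithinAt) fun t ht => ?_
    have ht := interior_subset ht
    exact mul_nonneg (hτ _ (harc t ht) _)
      (sin_nonneg_of_nonneg_of_le_pi (by linarith [ht.2]) (by linarith [ht.1, hT.2]))
  have := hmono (left_mem_Icc.2 hT.1) (right_mem_Icc.2 hT.1) hT.1
  simp only [hW, hγ, hγ', sub_zero, sub_self, sin_zero, cos_zero, mul_zero, mul_one, zero_add,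
    zero_smul, one_smul, add_zero, neg_zero] at this
  calc _ = fderiv ℝ H u e * sin T + H u * cos T := by
        have hu : u ∈ sphCap n θ := by simpa using harc 0 (left_mem_Icc.2 hT.1)
        rw [map_add, map_smul, map_smul, hext.fderiv_self hu]
        simp only [smul_eq_mul]; ring
    _ ≤ _ := this

theorem slerp_mem_sphCap (hc : 0 ≤ cos θ) {u w : V n} (hu : u ∈ sphCap n θ) (hw : w ∈ sphCap n θ)
    {T t : ℝ} (hT : cos T = ⟪u, w⟫) (hs : 0 < sin T) (hTπ : T ≤ π) (ht : t ∈ Icc 0 T) :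
    cos t • u + sin t • ((sin T)⁻¹ • (w - cos T • u)) ∈ sphCap n θ := by
  have hst : 0 ≤ sin t := sin_nonneg_of_nonneg_of_le_pi ht.1 (ht.2.trans hTπ)
  have hsTt : 0 ≤ sin (T - t) :=
    sin_nonneg_of_nonneg_of_le_pi (by linarith [ht.2]) (by linarith [ht.1])
  have he : cos t • u + sin t • ((sin T)⁻¹ • (w - cos T • u))
      = (sin T)⁻¹ • (sin (T - t) • u + sin t • w) := by
    rw [sin_sub]
    match_scalars <;> field_simp
    ring
  rw [he]
  have hsum : sin T ≤ sin (T - t) + sin t := by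
    have h1 : sin T = sin (T - t) * cos t + cos (T - t) * sin t := by
      rw [← sin_add]; ring_nf
    nlinarith [cos_le_one t, cos_le_one (T - t)]
  constructor
  · rw [norm_smul, norm_inv, Real.norm_eq_abs, abs_of_pos hs,
      show ‖sin (T - t) • u + sin t • w‖ = sin T from ?_]
    · field_simp
    rw [← sq_eq_sq₀ (norm_nonneg _) hs.le, norm_add_sq_real, norm_smul, norm_smul,
      inner_smul_left, inner_smul_right, hu.1, hw.1, ← hT, sin_sub]
    simp only [Real.norm_eq_abs, mul_one, sq_abs, conj_trivial]
    have a := sin_sq_add_cos_sq T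
    have b := sin_sq_add_cos_sq t
    linear_combination sin T ^ 2 * b - sin t ^ 2 * a
  · simp only [PiLp.smul_apply, PiLp.add_apply, smul_eq_mul]
    rw [inv_mul_eq_div, le_div_iff₀ hs]
    nlinarith [mul_le_mul_of_nonneg_left hu.2 hsTt, mul_le_mul_of_nonneg_left hw.2 hst,
      mul_le_mul_of_nonneg_left hsum hc]

/-- Convexity of `H`: the gradient inequality on the cap. -/
theorem IsHomExt.fderiv_le (hext : IsHomExt n θ 3 h H) (hτ : TauNonneg n θ H) (hc : 0 ≤ cos θ)
    (hpos : ∀ u ∈ sphCap n θ, 0 < H u) {u w : V n} (hu : u ∈ sphCap n θ) (hw : w ∈ sphCap n θ) :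
    fderiv ℝ H u w ≤ H w := by
  rcases eq_or_ne u w with rfl | hne
  · exact (hext.fderiv_self hu).le
  rcases eq_or_ne w (-u) with rfl | hne'
  · rw [map_neg, hext.fderiv_self hu]
    linarith [hpos u hu, hpos (-u) hw]
  have h1 : ⟪u, w⟫ < 1 := (inner_lt_one_iff_real_of_norm_eq_one hu.1 hw.1).2 hne
  have h2 : -1 < ⟪u, w⟫ := by
    have := (inner_lt_one_iff_real_of_norm_eq_one (x := -w) (y := u) (by simpa using hw.1) hu.1).2
      (fun hh => hne' (by rw [← hh, neg_neg]))
    rw [inner_neg_left, real_inner_comm] at this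
    linarith
  have hT : cos (arccos ⟪u, w⟫) = ⟪u, w⟫ := cos_arccos h2.le h1.le
  have hs : 0 < sin (arccos ⟪u, w⟫) := by
    rw [sin_arccos]; exact Real.sqrt_pos.2 (by nlinarith)
  have := hext.fderiv_arc_le hτ (u := u) (T := arccos ⟪u, w⟫) ⟨arccos_nonneg _, arccos_le_pi _⟩
    fun t ht => slerp_mem_sphCap hc hu hw hT hs (arccos_le_pi _) ht
  have he : cos (arccos ⟪u, w⟫) • u + sin (arccos ⟪u, w⟫) •
      ((sin (arccos ⟪u, w⟫))⁻¹ • (w - cos (arccos ⟪u, w⟫) • u)) = w := by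
    rw [smul_smul, mul_inv_cancel₀ hs.ne']; module
  rwa [he] at this

/-- A horizontal unit vector in the direction of `u`. -/
theorem exists_horizontal_unit (hn : 1 ≤ n) (u : V n) :
    ∃ e : V n, ‖e‖ = 1 ∧ e (Fin.last n) = 0 ∧ ∃ r : ℝ, 0 ≤ r ∧
      u = r • e + u (Fin.last n) • Etop n := by
  set p := u - u (Fin.last n) • Etop n with hp
  have hpl : p (Fin.last n) = 0 := by simp [hp]
  by_cases h0 : p = 0
  · refine ⟨EuclideanSpace.single ⟨0, by omega⟩ 1, by simp, ?_, 0, le_rfl, ?_⟩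
    · simp; omega
    · rw [zero_smul, zero_add]; exact sub_eq_zero.1 h0
  · have hn0 : ‖p‖ ≠ 0 := norm_ne_zero_iff.2 h0
    refine ⟨‖p‖⁻¹ • p, by rw [norm_smul, norm_inv, norm_norm, inv_mul_cancel₀ hn0],
      by simp [hpl], ‖p‖, norm_nonneg _, ?_⟩
    rw [smul_smul, mul_inv_cancel₀ hn0, one_smul, hp]; simp

theorem IsHomExt.fderiv_Etop_nonneg (hext : IsHomExt n θ 3 h H) (hcap : IsCapillaryF n θ H)
    (hτ : TauNonneg n θ H) (hn : 1 ≤ n) (hθ : θ ∈ Ioc 0 (π / 2))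
    (hpos : ∀ u ∈ sphCap n θ, 0 < H u) {u : V n} (hu : u ∈ sphCap n θ) :
    0 ≤ fderiv ℝ H u (Etop n) := by
  have hc := cos_nonneg_of_mem hθ
  have hsin := sin_pos_of_mem hθ
  rcases hu.2.eq_or_lt with heq | hlt
  · exact (hcap u ⟨hu.1, heq.symm⟩).ge
  obtain ⟨e, he, hel, r, hr, hue⟩ := exists_horizontal_unit hn u
  set b := u (Fin.last n) with hb
  have hrb : r ^ 2 + b ^ 2 = 1 := by
    have h1 := hu.1
    rw [← sq_eq_sq₀ (norm_nonneg _) zero_le_one, hue, norm_add_sq_real] at h1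
    simpa [norm_smul, he, inner_smul_left, inner_smul_right, hel, sq_abs] using h1
  have hrs : r < sin θ := by
    nlinarith [sin_sq_add_cos_sq θ]
  set w := sin θ • e + cos θ • Etop n with hw
  have hwb : w ∈ sphCapBdry n θ := smul_add_mem_sphCapBdry he hel
  have hwm : w ∈ sphCap n θ := ⟨hwb.1, hwb.2.ge⟩
  have h1 := hext.fderiv_le hτ hc hpos hu hwm
  have h2 := hext.fderiv_le hτ hc hpos hwm hu
  rw [← hext.fderiv_self hwm] at h1
  rw [← hext.fderiv_self hu] at h2
  have h3 := hcap w hwb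
  have huw : sin θ • u = r • w + (sin θ * b - r * cos θ) • Etop n := by
    rw [hw]; nth_rewrite 1 [hue]; module
  have hβ : 0 < sin θ * b - r * cos θ := by nlinarith
  have h4 := congrArg (fderiv ℝ H u) huw
  have h5 := congrArg (fderiv ℝ H w) huw
  simp only [map_add, map_smul, smul_eq_mul, h3, mul_zero, add_zero] at h4 h5
  by_contra hneg
  push Not at hneg
  nlinarith [mul_le_mul_of_nonneg_left h1 hr, mul_le_mul_of_nonneg_left h2 hsin.le,
    mul_neg_of_pos_of_neg hβ hneg]

/-- The maximal set in the upper half space whose support function on the cap is at most `H`. -/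
def wulff (n : ℕ) (θ : ℝ) (H : V n → ℝ) : Set (V n) :=
  {y | 0 ≤ y (Fin.last n) ∧ ∀ u ∈ sphCap n θ, ⟪u, y⟫ ≤ H u}

theorem convex_wulff : Convex ℝ (wulff n θ H) := by
  intro x hx y hy a b ha hb hab
  refine ⟨?_, fun u hu => ?_⟩
  · simp only [PiLp.add_apply, PiLp.smul_apply, smul_eq_mul]
    exact add_nonneg (mul_nonneg ha hx.1) (mul_nonneg hb hy.1)
  · rw [inner_add_right, inner_smul_right, inner_smul_right]
    calc _ ≤ a * H u + b * H u := by
          gcongr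
          · exact hx.2 u hu
          · exact hy.2 u hu
      _ = H u := by rw [← add_mul, hab, one_mul]

theorem isClosed_wulff : IsClosed (wulff n θ H) := by
  have : wulff n θ H = {y | 0 ≤ y (Fin.last n)} ∩ ⋂ u ∈ sphCap n θ, {y | ⟪u, y⟫ ≤ H u} := by
    ext y; simp [wulff]
  rw [this]
  exact (isClosed_le continuous_const (continuous_apply_coord _)).inter
    (isClosed_biInter fun u _ => isClosed_le (by fun_prop) continuous_const)

theorem isCompact_wulff (hn : 1 ≤ n) (hθ : θ ∈ Ioc 0 (π / 2))
    (hH : ContinuousOn H (sphCap n θ)) : IsCompact (wulff n θ H) := by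
  have hc := cos_nonneg_of_mem hθ
  have hsin := sin_pos_of_mem hθ
  obtain ⟨M, hM⟩ := isCompact_sphCap.bddAbove_image hH
  have hM : ∀ u ∈ sphCap n θ, H u ≤ M := fun u hu => hM (mem_image_of_mem _ hu)
  refine Metric.isCompact_of_isClosed_isBounded isClosed_wulff ?_
  refine isBounded_iff_forall_norm_le.2 ⟨M / sin θ + M, fun y hy => ?_⟩
  obtain ⟨e, he, hel, r, hr, hye⟩ := exists_horizontal_unit hn y
  have h1 := (hy.2 _ Etop_mem_sphCap).trans (hM _ Etop_mem_sphCap)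
  rw [inner_Etop_left] at h1
  have hb := smul_add_mem_sphCapBdry (θ := θ) he hel
  have hm : sin θ • e + cos θ • Etop n ∈ sphCap n θ := ⟨hb.1, hb.2.ge⟩
  have h2 := (hy.2 _ hm).trans (hM _ hm)
  have h3 : ⟪e, y⟫ = r := by
    rw [hye]; simp [inner_add_right, inner_smul_right, he, hel]
  rw [inner_add_left, inner_smul_left, inner_smul_left, h3, inner_Etop_left] at h2
  simp only [conj_trivial] at h2
  have h4 : r ≤ M / sin θ := by
    rw [le_div_iff₀ hsin]; nlinarith [mul_nonneg hc hy.1]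
  calc ‖y‖ ≤ ‖r • e‖ + ‖y (Fin.last n) • Etop n‖ := by
        conv_lhs => rw [hye]
        exact norm_add_le _ _
    _ = r + y (Fin.last n) := by
        rw [norm_smul, norm_smul, he, norm_Etop, Real.norm_eq_abs, Real.norm_eq_abs,
          abs_of_nonneg hr, abs_of_nonneg hy.1, mul_one, mul_one]
    _ ≤ _ := add_le_add h4 h1

theorem exists_pos_le (hH : ContinuousOn H (sphCap n θ)) (hpos : ∀ u ∈ sphCap n θ, 0 < H u) :
    ∃ m > 0, ∀ u ∈ sphCap n θ, m ≤ H u := by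
  obtain ⟨u₀, hu₀, hmin⟩ := isCompact_sphCap.exists_isMinOn ⟨_, Etop_mem_sphCap (n := n)⟩ hH
  exact ⟨H u₀, hpos u₀ hu₀, fun u hu => hmin hu⟩

theorem exists_ball_inter_subset_wulff (hH : ContinuousOn H (sphCap n θ))
    (hpos : ∀ u ∈ sphCap n θ, 0 < H u) :
    ∃ m > 0, ∀ y : V n, 0 ≤ y (Fin.last n) → ‖y‖ < m → y ∈ wulff n θ H := by
  obtain ⟨m, hm, hle⟩ := exists_pos_le hH hpos
  refine ⟨m, hm, fun y hy hym => ⟨hy, fun u hu => ?_⟩⟩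
  calc ⟪u, y⟫ ≤ ‖u‖ * ‖y‖ := real_inner_le_norm u y
    _ ≤ m := by rw [hu.1, one_mul]; exact hym.le
    _ ≤ H u := hle u hu

theorem interior_wulff_nonempty (hH : ContinuousOn H (sphCap n θ))
    (hpos : ∀ u ∈ sphCap n θ, 0 < H u) : (interior (wulff n θ H)).Nonempty := by
  obtain ⟨m, hm, hsub⟩ := exists_ball_inter_subset_wulff hH hpos
  refine ⟨(m / 2) • Etop n, ?_⟩
  rw [mem_interior]
  refine ⟨{y | 0 < y (Fin.last n)} ∩ {y | ‖y‖ < m}, fun y hy => hsub y (le_of_lt hy.1) hy.2,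
    (isOpen_lt continuous_const (continuous_apply_coord _)).inter
      (isOpen_lt continuous_norm continuous_const), ?_, ?_⟩
  · simpa using hm
  · simp only [mem_ofPred_eq, norm_smul, norm_Etop, mul_one, Real.norm_eq_abs]
    rw [abs_of_pos (by positivity)]; linarith

theorem zero_mem_relintBase_wulff (hH : ContinuousOn H (sphCap n θ))
    (hpos : ∀ u ∈ sphCap n θ, 0 < H u) : (0 : V n) ∈ relintBase n (wulff n θ H) := by
  obtain ⟨m, hm, hsub⟩ := exists_ball_inter_subset_wulff hH hpos
  exact ⟨rfl, m, hm, fun y hy hlt => hsub y hy.ge (by simpa using hlt)⟩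

/-- The gradient of `H` at `u` is a point of the Wulff shape with outer normal `u`. -/
theorem IsHomExt.exists_mem_wulff (hext : IsHomExt n θ 3 h H) (hcap : IsCapillaryF n θ H)
    (hτ : TauNonneg n θ H) (hn : 1 ≤ n) (hθ : θ ∈ Ioc 0 (π / 2))
    (hpos : ∀ u ∈ sphCap n θ, 0 < H u) {u : V n} (hu : u ∈ sphCap n θ) :
    ∃ y ∈ wulff n θ H, ⟪u, y⟫ = H u := by
  refine ⟨(InnerProductSpace.toDual ℝ (V n)).symm (fderiv ℝ H u), ⟨?_, fun w hw => ?_⟩, ?_⟩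
  · rw [← inner_Etop, InnerProductSpace.toDual_symm_apply]
    exact hext.fderiv_Etop_nonneg hcap hτ hn hθ hpos hu
  · rw [real_inner_comm, InnerProductSpace.toDual_symm_apply]
    exact hext.fderiv_le hτ (cos_nonneg_of_mem hθ) hpos hu hw
  · rw [real_inner_comm, InnerProductSpace.toDual_symm_apply, hext.fderiv_self hu]

theorem suppFn_wulff {u : V n} (hu : u ∈ sphCap n θ) (hy : ∃ y ∈ wulff n θ H, ⟪u, y⟫ = H u) :
    suppFn n (wulff n θ H) u = H u := by
  obtain ⟨y, hy, he⟩ := hy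
  refine IsGreatest.csSup_eq ⟨⟨y, hy, he⟩, ?_⟩
  rintro _ ⟨x, hx, rfl⟩
  exact hx.2 u hu

theorem mem_relintBase_wulff_iff (hn : 1 ≤ n) (hH : ContinuousOn H (sphCap n θ))
    (hpos : ∀ u ∈ sphCap n θ, 0 < H u) {z : V n} :
    z ∈ relintBase n (wulff n θ H) ↔
      z (Fin.last n) = 0 ∧ ∀ u ∈ sphCap n θ, 0 < H u - ⟪u, z⟫ := by
  constructor
  · rintro ⟨hz, ε, hε, hball⟩
    refine ⟨hz, fun u hu => ?_⟩
    obtain ⟨e, he, hel, r, hr, hue⟩ := exists_horizontal_unit hn u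
    have hmem : z + (ε / 2) • e ∈ wulff n θ H := by
      refine hball _ (by simp [hz, hel]) ?_
      rw [add_sub_cancel_left, norm_smul, he, Real.norm_eq_abs, abs_of_pos (by positivity)]
      linarith
    have h1 := hmem.2 u hu
    have h2 : ⟪u, e⟫ = r := by
      rw [hue, inner_add_left, inner_smul_left, inner_smul_left, inner_Etop_left, hel,
        real_inner_self_eq_norm_sq, he]
      simp
    rw [inner_add_right, inner_smul_right, h2] at h1
    rcases hr.eq_or_lt with h0 | h0
    · have h3 : ⟪u, z⟫ = 0 := by
        rw [hue, ← h0, zero_smul, zero_add, inner_smul_left, inner_Etop_left, hz, mul_zero]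
      rw [h3, sub_zero]; exact hpos u hu
    · have : 0 < ε / 2 * r := by positivity
      linarith
  · rintro ⟨hz, hlt⟩
    obtain ⟨m, hm, hle⟩ := exists_pos_le (H := fun u => H u - ⟪u, z⟫)
      (hH.sub (by fun_prop)) hlt
    refine ⟨hz, m, hm, fun y hy hym => ⟨hy.ge, fun u hu => ?_⟩⟩
    have h1 := hle u hu
    have h2 : ⟪u, y - z⟫ ≤ m := by
      calc ⟪u, y - z⟫ ≤ ‖u‖ * ‖y - z‖ := real_inner_le_norm _ _
        _ ≤ m := by rw [hu.1, one_mul]; exact hym.le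
    rw [inner_sub_right] at h2
    linarith

end Gradient

section Psi

variable {ψ : ℝ → ℝ}

theorem PsiOK.differentiableAt (hψ : PsiOK ψ) {x : ℝ} (hx : 0 < x) : DifferentiableAt ℝ ψ x := by
  rcases hψ with rfl | ⟨p, -, rfl⟩ | rfl
  · fun_prop
  · exact differentiableAt_id.rpow_const (Or.inl hx.ne')
  · exact (Real.differentiableAt_log hx.ne').neg

theorem PsiOK.continuousOn (hψ : PsiOK ψ) : ContinuousOn ψ (Ioi 0) :=
  fun _ hx => (hψ.differentiableAt hx).continuousAt.continuousWithinAt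

theorem PsiOK.continuousOn_deriv (hψ : PsiOK ψ) : ContinuousOn (deriv ψ) (Ioi 0) := by
  rcases hψ with rfl | ⟨p, -, rfl⟩ | rfl
  · rw [show deriv (fun x : ℝ => x ^ 2) = fun x => 2 * x by funext x; simp]
    fun_prop
  · intro x hx
    have hx : x ≠ 0 := ne_of_gt hx
    rw [show deriv (fun x : ℝ => x ^ p) = fun x => p * x ^ (p - 1) from
      funext fun x => Real.deriv_rpow_const x p]
    exact (continuousAt_const.mul
      (continuousAt_id.rpow_const (Or.inl hx))).continuousWithinAt
  · rw [show deriv (fun x : ℝ => -Real.log x) = fun x => -x⁻¹ by funext x; simp]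
    exact (continuousOn_inv₀.mono fun x hx => ne_of_gt hx).neg

theorem PsiOK.strictMonoOn_deriv (hψ : PsiOK ψ) : StrictMonoOn (deriv ψ) (Ioi 0) := by
  intro x hx y hy hxy
  have hx : 0 < x := hx
  rcases hψ with rfl | ⟨p, hp, rfl⟩ | rfl
  · simp [hxy]
  · simp only [Real.deriv_rpow_const]
    have := Real.rpow_lt_rpow_of_neg hx hxy (show p - 1 < 0 by linarith)
    nlinarith
  · simp only [deriv.fun_neg, Real.deriv_log, neg_lt_neg_iff]
    exact inv_strictAnti₀ hx hxy

/-- The tangent line inequality for the convex function `ψ`. -/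
theorem PsiOK.sub_le (hψ : PsiOK ψ) {x y : ℝ} (hx : 0 < x) (hy : 0 < y) :
    ψ y - ψ x ≤ deriv ψ y * (y - x) := by
  have hconv : ConvexOn ℝ (Ioi 0) ψ :=
    (StrictMonoOn.strictConvexOn_of_deriv (convex_Ioi 0) hψ.continuousOn
      (by simpa using hψ.strictMonoOn_deriv)).convexOn
  have hd := (hψ.differentiableAt hy).hasDerivAt
  rcases lt_trichotomy x y with h | rfl | h
  · have := hconv.slope_le_of_hasDerivAt hx hy h hd
    rwa [slope_def_field, div_le_iff₀ (by linarith)] at this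
  · simp
  · have := hconv.le_slope_of_hasDerivAt hy hx h hd
    rw [slope_def_field, le_div_iff₀ (by linarith)] at this
    linarith

/-- The derivative of `ψ`, frozen below `c`. -/
def truncDeriv (ψ : ℝ → ℝ) (c x : ℝ) : ℝ := deriv ψ (max x c)

theorem PsiOK.continuous_truncDeriv (hψ : PsiOK ψ) {c : ℝ} (hc : 0 < c) :
    Continuous (truncDeriv ψ c) :=
  hψ.continuousOn_deriv.comp_continuous (by fun_prop) fun x => hc.trans_le (le_max_right x c)

theorem PsiOK.monotone_truncDeriv (hψ : PsiOK ψ) {c : ℝ} (hc : 0 < c) :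
    Monotone (truncDeriv ψ c) := fun x y hxy =>
  hψ.strictMonoOn_deriv.monotoneOn (hc.trans_le (le_max_right x c))
    (hc.trans_le (le_max_right y c)) (max_le_max_right c hxy)

theorem PsiOK.truncDeriv_lt (hψ : PsiOK ψ) {c x y : ℝ} (hc : 0 < c) (hx : x ≤ c) (hy : c < y) :
    truncDeriv ψ c x < truncDeriv ψ c y := by
  rw [truncDeriv, truncDeriv, max_eq_right hx, max_eq_left hy.le]
  exact hψ.strictMonoOn_deriv hc (hc.trans hy) hy

theorem truncDeriv_of_le {c x : ℝ} (hx : c ≤ x) : truncDeriv ψ c x = deriv ψ x := by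
  rw [truncDeriv, max_eq_left hx]

theorem PsiOK.deriv_le_truncDeriv (hψ : PsiOK ψ) {c x : ℝ} (hc : 0 < c) (hx : 0 < x) :
    deriv ψ x ≤ truncDeriv ψ c x :=
  hψ.strictMonoOn_deriv.monotoneOn hx (hc.trans_le (le_max_right x c)) (le_max_left x c)

end Psi

section Integral

variable {n : ℕ} {θ : ℝ}

theorem integrableOn_capCap (hc : 0 ≤ cos θ) {f : V n → ℝ} (hf : ContinuousOn f (capCap n θ)) :
    IntegrableOn f (capCap n θ) μH[(n : ℝ)] := by
  obtain ⟨M, hM⟩ := isCompact_capCap.exists_bound_of_continuousOn hf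
  exact IntegrableOn.of_bound (hausdorffMeasure_capCap_lt_top hc)
    (hf.aestronglyMeasurable measurableSet_capCap) M
    ((ae_restrict_iff' measurableSet_capCap).2 (.of_forall hM))

theorem continuous_setIntegral_capCap (hc : 0 ≤ cos θ) {F : V n → V n → ℝ}
    (hF : ContinuousOn (fun p : V n × V n => F p.1 p.2) (univ ×ˢ capCap n θ)) :
    Continuous fun z => ∫ ζ in capCap n θ, F z ζ ∂μH[(n : ℝ)] := by
  have hF1 : ∀ z, ContinuousOn (F z) (capCap n θ) := fun z =>
    hF.comp (f := fun ζ => (z, ζ)) (by fun_prop) fun ζ hζ => ⟨mem_univ _, hζ⟩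
  have hF2 : ∀ ζ ∈ capCap n θ, Continuous fun z => F z ζ := fun ζ hζ =>
    hF.comp_continuous (f := fun z => (z, ζ)) (by fun_prop) fun z => ⟨mem_univ _, hζ⟩
  rw [continuous_iff_continuousAt]
  intro z₀
  obtain ⟨M, hM⟩ := ((isCompact_closedBall z₀ 1).prod isCompact_capCap).exists_bound_of_continuousOn
    (hF.mono (prod_mono (subset_univ _) subset_rfl))
  refine MeasureTheory.continuousAt_of_dominated (bound := fun _ => M)
    (.of_forall fun z => (hF1 z).aestronglyMeasurable measurableSet_capCap) ?_
    (integrableOn_capCap hc continuousOn_const)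
    ((ae_restrict_iff' measurableSet_capCap).2 (.of_forall fun ζ hζ => (hF2 ζ hζ).continuousAt))
  filter_upwards [Metric.closedBall_mem_nhds z₀ one_pos] with z hz
  exact (ae_restrict_iff' measurableSet_capCap).2 (.of_forall fun ζ hζ => hM (z, ζ) ⟨hz, hζ⟩)

theorem setIntegral_capCap_pos (hθ : θ ∈ Ioc 0 (π / 2)) {f : V n → ℝ}
    (hf : ContinuousOn f (capCap n θ)) (hnn : ∀ ζ ∈ capCap n θ, 0 ≤ f ζ) {ζ₀ : V n}
    (hζ₀ : ζ₀ ∈ capCap n θ) (hpos : 0 < f ζ₀) : 0 < ∫ ζ in capCap n θ, f ζ ∂μH[(n : ℝ)] := by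
  rw [setIntegral_pos_iff_support_of_nonneg_ae
    ((ae_restrict_iff' measurableSet_capCap).2 (.of_forall hnn))
    (integrableOn_capCap (cos_nonneg_of_mem hθ) hf)]
  obtain ⟨U, hU, hζU, hsub⟩ := mem_nhdsWithin.1 ((hf ζ₀ hζ₀) (lt_mem_nhds hpos))
  exact (hausdorffMeasure_inter_capCap_pos hθ hU hζ₀ hζU).trans_le
    (measure_mono fun ζ hζ => ⟨ne_of_gt (hsub hζ), hζ.2⟩)

theorem integral_mul_inner_eq_zero (hc : 0 ≤ cos θ) {f : V n → ℝ}
    (hf : ContinuousOn f (capCap n θ))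
    (h0 : ∀ i : Fin (n + 1), i ≠ Fin.last n → ∫ ζ in capCap n θ, f ζ * ζ i ∂μH[(n : ℝ)] = 0)
    {w : V n} (hw : w (Fin.last n) = 0) :
    ∫ ζ in capCap n θ, f ζ * ⟪ζ, w⟫ ∂μH[(n : ℝ)] = 0 := by
  have he : ∀ ζ : V n, f ζ * ⟪ζ, w⟫ = ∑ i, f ζ * ζ i * w i := fun ζ => by
    rw [PiLp.inner_apply, Finset.mul_sum]
    refine Finset.sum_congr rfl fun i _ => ?_
    rw [RCLike.inner_apply, conj_trivial]; ring
  simp_rw [he]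
  rw [integral_finsetSum]
  · refine Finset.sum_eq_zero fun i _ => ?_
    rw [integral_mul_const]
    by_cases hi : i = Fin.last n
    · rw [hi, hw, mul_zero]
    · rw [h0 i hi, zero_mul]
  · intro i _
    exact integrableOn_capCap hc ((hf.mul (continuous_apply_coord i).continuousOn).mul
      continuousOn_const)

/-- The reflection of the space in the hyperplane orthogonal to `v`. -/
theorem exists_reflection (v : V n) :
    ∃ ρ : V n ≃ₗᵢ[ℝ] V n, ∀ x, ρ x = x - (2 * ⟪x, v⟫ / ‖v‖ ^ 2) • v := by
  refine ⟨(ℝ ∙ v)ᗮ.reflection, fun x => ?_⟩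
  rw [Submodule.reflection_orthogonal_apply, Submodule.reflection_singleton_apply,
    real_inner_comm]
  simp only [RCLike.ofReal_real_eq_id, id_eq]
  module

theorem setIntegral_capCap_comp (ρ : V n ≃ₗᵢ[ℝ] V n)
    (hρ : ∀ ζ, ρ ζ ∈ capCap n θ ↔ ζ ∈ capCap n θ) (f : V n → ℝ) :
    ∫ ζ in capCap n θ, f (ρ ζ) ∂μH[(n : ℝ)] = ∫ ζ in capCap n θ, f ζ ∂μH[(n : ℝ)] := by
  have hmp : MeasurePreserving ρ μH[(n : ℝ)] μH[(n : ℝ)] :=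
    ρ.toIsometryEquiv.measurePreserving_hausdorffMeasure n
  have := hmp.setIntegral_preimage_emb ρ.toHomeomorph.measurableEmbedding f (capCap n θ)
  rwa [show ρ ⁻¹' capCap n θ = capCap n θ from Set.ext hρ] at this

end Integral

section Entropy

variable {ψ : ℝ → ℝ} {n : ℕ} {θ : ℝ} {h H : V n → ℝ}

/-- The functional whose critical point is the entropy point. -/
def entropy (ψ : ℝ → ℝ) (n : ℕ) (θ : ℝ) (h : V n → ℝ) (z : V n) : ℝ :=
  ∫ ζ in capCap n θ, ψ (h ζ - ⟪ζ, z⟫) ∂μH[(n : ℝ)]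

theorem continuousOn_deriv_defect (hψ : PsiOK ψ) (hh : ContinuousOn h (capCap n θ)) {z : V n}
    (hz : ∀ ζ ∈ capCap n θ, 0 < h ζ - ⟪ζ, z⟫) :
    ContinuousOn (fun ζ => deriv ψ (h ζ - ⟪ζ, z⟫)) (capCap n θ) :=
  hψ.continuousOn_deriv.comp (hh.sub (by fun_prop)) hz

theorem entropy_sub_le (hψ : PsiOK ψ) (hc : 0 ≤ cos θ) (hh : ContinuousOn h (capCap n θ))
    {z w : V n} (hz : ∀ ζ ∈ capCap n θ, 0 < h ζ - ⟪ζ, z⟫)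
    (hw : ∀ ζ ∈ capCap n θ, 0 < h ζ - ⟪ζ, w⟫) :
    entropy ψ n θ h z - entropy ψ n θ h w ≤
      ∫ ζ in capCap n θ, deriv ψ (h ζ - ⟪ζ, z⟫) * ⟪ζ, w - z⟫ ∂μH[(n : ℝ)] := by
  have hi : ∀ {z : V n}, (∀ ζ ∈ capCap n θ, 0 < h ζ - ⟪ζ, z⟫) →
      IntegrableOn (fun ζ => ψ (h ζ - ⟪ζ, z⟫)) (capCap n θ) μH[(n : ℝ)] := fun hz =>
    integrableOn_capCap hc (hψ.continuousOn.comp (hh.sub (by fun_prop)) hz)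
  rw [entropy, entropy, ← integral_sub (hi hz) (hi hw)]
  refine setIntegral_mono_on ((hi hz).sub (hi hw)) (integrableOn_capCap hc
    ((continuousOn_deriv_defect hψ hh hz).mul (by fun_prop))) measurableSet_capCap fun ζ hζ => ?_
  refine (hψ.sub_le (hw ζ hζ) (hz ζ hζ)).trans_eq ?_
  rw [inner_sub_right]; ring

theorem continuous_integral_truncDeriv (hψ : PsiOK ψ) (hc : 0 ≤ cos θ)
    (hh : ContinuousOn h (capCap n θ)) {c : ℝ} (hc0 : 0 < c) {g : V n → ℝ} (hg : Continuous g) :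
    Continuous fun z => ∫ ζ in capCap n θ,
      truncDeriv ψ c (h ζ - ⟪ζ, z⟫) * g ζ ∂μH[(n : ℝ)] := by
  refine continuous_setIntegral_capCap hc (F := fun z ζ => truncDeriv ψ c (h ζ - ⟪ζ, z⟫) * g ζ) ?_
  refine ContinuousOn.mul ((hψ.continuous_truncDeriv hc0).comp_continuousOn ?_) (by fun_prop)
  refine ContinuousOn.sub (hh.comp continuousOn_snd fun p hp => hp.2) ?_
  exact (continuous_snd.inner continuous_fst).continuousOn

theorem norm_le_two_of_mem_capCap (hc : 0 ≤ cos θ) {ζ : V n} (hζ : ζ ∈ capCap n θ) :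
    ‖ζ‖ ≤ 2 := by
  have h1 : ‖ζ + cos θ • Etop n‖ = 1 := hζ.2
  calc ‖ζ‖ = ‖(ζ + cos θ • Etop n) - cos θ • Etop n‖ := by rw [add_sub_cancel_right]
    _ ≤ ‖ζ + cos θ • Etop n‖ + ‖cos θ • Etop n‖ := norm_sub_le _ _
    _ ≤ 2 := by
      rw [h1, norm_smul, norm_Etop, Real.norm_eq_abs, abs_of_nonneg hc]
      linarith [cos_le_one θ]

theorem inner_add_Etop {z : V n} (hz : z (Fin.last n) = 0) (ζ : V n) :
    ⟪ζ + cos θ • Etop n, z⟫ = ⟪ζ, z⟫ := by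
  rw [inner_add_left, inner_smul_left, inner_Etop_left, hz, mul_zero, add_zero]

theorem exists_pos_le_capCap {f : V n → ℝ} (hf : ContinuousOn f (capCap n θ)) {S : Set (V n)}
    (hS : IsClosed S) (hpos : ∀ ζ ∈ capCap n θ ∩ S, 0 < f ζ) :
    ∃ c > 0, ∀ ζ ∈ capCap n θ ∩ S, c ≤ f ζ := by
  rcases (capCap n θ ∩ S).eq_empty_or_nonempty with he | hne
  · exact ⟨1, one_pos, by simp [he]⟩
  · obtain ⟨ζ₀, h0, hmin⟩ := (isCompact_capCap.inter_right hS).exists_isMinOn hne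
      (hf.mono inter_subset_left)
    exact ⟨f ζ₀, hpos ζ₀ h0, fun ζ hζ => hmin hζ⟩

/-- At a boundary point `z₀` of the base there is an outer normal `v` which has positive inner
product with every contact direction. -/
theorem exists_outer_normal (hc : 0 ≤ cos θ) (hpos : ∀ ζ ∈ capCap n θ, 0 < h ζ)
    (hh : ContinuousOn h (capCap n θ)) {K : Set (V n)} (hK0 : ∀ y ∈ K, 0 ≤ y (Fin.last n))
    (hK : ∀ y ∈ K, ∀ ζ ∈ capCap n θ, ⟪ζ + cos θ • Etop n, y⟫ ≤ h ζ)
    {z₀ : V n} (hz₀ : z₀ (Fin.last n) = 0) (hne : ∃ ζ ∈ capCap n θ, h ζ - ⟪ζ, z₀⟫ = 0) :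
    ∃ v : V n, v (Fin.last n) = 0 ∧ v ≠ 0 ∧ (∀ y ∈ K, ⟪y - z₀, v⟫ ≤ 0) ∧
      ∀ ζ ∈ capCap n θ, h ζ - ⟪ζ, z₀⟫ = 0 → 0 < ⟪ζ, v⟫ := by
  obtain ⟨m, hm, hmle⟩ := exists_pos_le_capCap hh isClosed_univ (by simpa using hpos)
  set N : Set (V n) := {v | v (Fin.last n) = 0 ∧ (∀ y ∈ K, ⟪y - z₀, v⟫ ≤ 0) ∧ m ≤ ⟪z₀, v⟫}
    with hN
  have hNcl : IsClosed N := by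
    have : N = {v | v (Fin.last n) = 0} ∩ ((⋂ y ∈ K, {v | ⟪y - z₀, v⟫ ≤ 0}) ∩
        {v | m ≤ ⟪z₀, v⟫}) := by
      ext v; simp [hN]
    rw [this]
    have hlast : IsClosed {v : V n | v (Fin.last n) = 0} :=
      isClosed_singleton.preimage (continuous_apply_coord (Fin.last n))
    exact hlast.inter
      ((isClosed_biInter fun y _ => isClosed_le (by fun_prop) continuous_const).inter
        (isClosed_le continuous_const (by fun_prop)))
  have hNcv : Convex ℝ N := by
    intro x hx y hy a b ha hb hab
    refine ⟨by simp [hx.1, hy.1], fun k hk => ?_, ?_⟩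
    · rw [inner_add_right, inner_smul_right, inner_smul_right]
      nlinarith [hx.2.1 k hk, hy.2.1 k hk]
    · rw [inner_add_right, inner_smul_right, inner_smul_right]
      calc m = a * m + b * m := by rw [← add_mul, hab, one_mul]
        _ ≤ _ := by
          gcongr
          · exact hx.2.2
          · exact hy.2.2
  have hproj : ∀ ζ ∈ capCap n θ, h ζ - ⟪ζ, z₀⟫ = 0 → ζ - ζ (Fin.last n) • Etop n ∈ N := by
    intro ζ hζ h0
    refine ⟨by simp, fun y hy => ?_, ?_⟩
    · have h1 := hK y hy ζ hζ
      have h2 := hK0 y hy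
      have h3 : 0 ≤ ζ (Fin.last n) := hζ.1
      rw [inner_add_left, inner_smul_left, inner_Etop_left] at h1
      simp only [conj_trivial] at h1
      rw [inner_sub_right, inner_smul_right, inner_Etop, PiLp.sub_apply, hz₀, inner_sub_left,
        real_inner_comm, real_inner_comm ζ z₀]
      nlinarith [mul_nonneg h3 h2, mul_nonneg hc h2]
    · rw [inner_sub_right, inner_smul_right, inner_Etop, hz₀, mul_zero, sub_zero,
        real_inner_comm]
      linarith [hmle ζ ⟨hζ, mem_univ _⟩]
  obtain ⟨ζ₁, hζ₁, h₁⟩ := hne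
  obtain ⟨v, hv, hmin⟩ := exists_norm_eq_iInf_of_complete_convex ⟨_, hproj ζ₁ hζ₁ h₁⟩
    hNcl.isComplete hNcv 0
  rw [norm_eq_iInf_iff_real_inner_le_zero hNcv hv] at hmin
  have hv0 : v ≠ 0 := by
    rintro rfl
    have := hv.2.2
    rw [inner_zero_right] at this
    linarith
  refine ⟨v, hv.1, hv0, hv.2.1, fun ζ hζ h0 => ?_⟩
  have h2 := hmin _ (hproj ζ hζ h0)
  rw [zero_sub, inner_neg_left, inner_sub_right, inner_sub_right, inner_smul_right, inner_Etop,
    hv.1, mul_zero, sub_zero, real_inner_self_eq_norm_sq, real_inner_comm] at h2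
  have : 0 < ‖v‖ ^ 2 := by positivity
  linarith

theorem integral_truncDeriv_neg (hψ : PsiOK ψ) (hθ : θ ∈ Ioc 0 (π / 2))
    (hh : ContinuousOn h (capCap n θ)) {K : Set (V n)}
    (hK : ∀ y ∈ K, ∀ ζ ∈ capCap n θ, ⟪ζ + cos θ • Etop n, y⟫ ≤ h ζ)
    (hsupp : ∀ ζ ∈ capCap n θ, ∃ y ∈ K, ⟪ζ + cos θ • Etop n, y⟫ = h ζ)
    {z₀ : V n} (hz₀ : z₀ (Fin.last n) = 0) (hne : ∃ ζ ∈ capCap n θ, h ζ - ⟪ζ, z₀⟫ = 0)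
    {v : V n} (hvl : v (Fin.last n) = 0) (hv0 : v ≠ 0) (hvK : ∀ y ∈ K, ⟪y - z₀, v⟫ ≤ 0)
    (hvT : ∀ ζ ∈ capCap n θ, h ζ - ⟪ζ, z₀⟫ = 0 → 0 < ⟪ζ, v⟫) {c : ℝ} (hc0 : 0 < c)
    (hcv : ∀ ζ ∈ capCap n θ, ⟪ζ, v⟫ ≤ 0 → c < h ζ - ⟪ζ, z₀⟫) :
    ∫ ζ in capCap n θ, truncDeriv ψ c (h ζ - ⟪ζ, z₀⟫) * ⟪ζ, v⟫ ∂μH[(n : ℝ)] < 0 := by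
  have hc := cos_nonneg_of_mem hθ
  have hv2 : 0 < ‖v‖ ^ 2 := by positivity
  obtain ⟨ρ, hρ⟩ := exists_reflection v
  have hρv : ∀ ζ, ⟪ρ ζ, v⟫ = -⟪ζ, v⟫ := fun ζ => by
    rw [hρ, inner_sub_left, inner_smul_left, real_inner_self_eq_norm_sq, conj_trivial]
    field_simp; ring
  have hρE : ∀ ζ, ρ ζ + cos θ • Etop n = ρ (ζ + cos θ • Etop n) := fun ζ => by
    rw [hρ, hρ, inner_add_Etop hvl]; module
  have hρl : ∀ ζ, (ρ ζ) (Fin.last n) = ζ (Fin.last n) := fun ζ => by simp [hρ, hvl]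
  have hρC : ∀ ζ, ρ ζ ∈ capCap n θ ↔ ζ ∈ capCap n θ := fun ζ => by
    simp only [capCap, mem_ofPred_eq, hρl, hρE, LinearIsometryEquiv.norm_map]
  have hρρ : ∀ ζ, ρ (ρ ζ) = ζ := fun ζ => by
    rw [hρ (ρ ζ), hρv, hρ ζ]; module
  have hcmp : ∀ ζ ∈ capCap n θ, 0 ≤ ⟪ζ, v⟫ → h ζ - ⟪ζ, z₀⟫ ≤ h (ρ ζ) - ⟪ρ ζ, z₀⟫ := by
    intro ζ hζ ha
    obtain ⟨y, hy, hye⟩ := hsupp ζ hζ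
    have h1 := hK y hy (ρ ζ) ((hρC ζ).2 hζ)
    have h2 := hvK y hy
    rw [← hye]
    rw [← inner_add_Etop (θ := θ) hz₀, ← inner_add_Etop (θ := θ) hz₀ (ρ ζ)]
    have h3 : ⟪ζ + cos θ • Etop n, y - z₀⟫ = ⟪ρ ζ + cos θ • Etop n, y - z₀⟫ +
        2 * ⟪ζ, v⟫ / ‖v‖ ^ 2 * ⟪y - z₀, v⟫ := by
      have h4 : ζ + cos θ • Etop n = (ρ ζ + cos θ • Etop n) + (2 * ⟪ζ, v⟫ / ‖v‖ ^ 2) • v := by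
        rw [hρ]; module
      calc _ = ⟪(ρ ζ + cos θ • Etop n) + (2 * ⟪ζ, v⟫ / ‖v‖ ^ 2) • v, y - z₀⟫ :=
            congrArg (⟪·, y - z₀⟫) h4
        _ = _ := by rw [inner_add_left, real_inner_smul_left, real_inner_comm v (y - z₀)]
    have h5 : 0 ≤ 2 * ⟪ζ, v⟫ / ‖v‖ ^ 2 := by positivity
    rw [inner_sub_right, inner_sub_right] at h3
    nlinarith [mul_nonpos_of_nonneg_of_nonpos h5 h2]
  set χ := truncDeriv ψ c with hχ
  have hmono : Monotone χ := hψ.monotone_truncDeriv hc0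
  set D : V n → ℝ := fun ζ => h ζ - ⟪ζ, z₀⟫ with hD
  have hDc : ContinuousOn D (capCap n θ) := hh.sub (by fun_prop)
  have hDρ : ContinuousOn (fun ζ => D (ρ ζ)) (capCap n θ) :=
    hDc.comp ρ.continuous.continuousOn fun ζ hζ => (hρC ζ).2 hζ
  have hχc : Continuous χ := hψ.continuous_truncDeriv hc0
  have hinc : Continuous fun ζ : V n => ⟪ζ, v⟫ := by fun_prop
  have hA : ContinuousOn (fun ζ => χ (D ζ) * ⟪ζ, v⟫) (capCap n θ) :=
    (hχc.comp_continuousOn hDc).mul hinc.continuousOn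
  have hB : ContinuousOn (fun ζ => χ (D (ρ ζ)) * ⟪ζ, v⟫) (capCap n θ) :=
    (hχc.comp_continuousOn hDρ).mul hinc.continuousOn
  have hswap := setIntegral_capCap_comp ρ hρC fun ζ => χ (D ζ) * ⟪ζ, v⟫
  simp only [hρv, mul_neg, integral_neg] at hswap
  obtain ⟨ζ₁, hζ₁, h₁⟩ := hne
  have hpos : 0 < ∫ ζ in capCap n θ,
      (χ (D (ρ ζ)) * ⟪ζ, v⟫ - χ (D ζ) * ⟪ζ, v⟫) ∂μH[(n : ℝ)] := by
    refine setIntegral_capCap_pos hθ (hB.sub hA) (fun ζ hζ => ?_) hζ₁ ?_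
    · rw [← sub_mul]
      rcases le_total 0 ⟪ζ, v⟫ with ha | ha
      · exact mul_nonneg (sub_nonneg.2 (hmono (hcmp ζ hζ ha))) ha
      · have := hcmp (ρ ζ) ((hρC ζ).2 hζ) (by rw [hρv]; linarith)
        rw [hρρ] at this
        exact mul_nonneg_of_nonpos_of_nonpos (sub_nonpos.2 (hmono this)) ha
    · rw [← sub_mul]
      have ha := hvT ζ₁ hζ₁ h₁
      refine mul_pos (sub_pos.2 ?_) ha
      refine hψ.truncDeriv_lt hc0 (h₁.le.trans hc0.le) ?_
      exact hcv (ρ ζ₁) ((hρC ζ₁).2 hζ₁) (by rw [hρv]; linarith)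
  rw [integral_sub (integrableOn_capCap hc hB) (integrableOn_capCap hc hA)] at hpos
  linarith

/-- Near a boundary point of the base, the entropy can be decreased by a fixed amount. -/
theorem exists_entropy_descent (hψ : PsiOK ψ) (hθ : θ ∈ Ioc 0 (π / 2))
    (hpos : ∀ ζ ∈ capCap n θ, 0 < h ζ)
    (hh : ContinuousOn h (capCap n θ)) {K : Set (V n)} (hK0 : ∀ y ∈ K, 0 ≤ y (Fin.last n))
    (hK : ∀ y ∈ K, ∀ ζ ∈ capCap n θ, ⟪ζ + cos θ • Etop n, y⟫ ≤ h ζ)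
    (hsupp : ∀ ζ ∈ capCap n θ, ∃ y ∈ K, ⟪ζ + cos θ • Etop n, y⟫ = h ζ)
    {z₀ : V n} (hz₀ : z₀ (Fin.last n) = 0) (hnn : ∀ ζ ∈ capCap n θ, 0 ≤ h ζ - ⟪ζ, z₀⟫)
    (hne : ∃ ζ ∈ capCap n θ, h ζ - ⟪ζ, z₀⟫ = 0) :
    ∃ r > 0, ∃ δ > 0, ∀ z : V n, z (Fin.last n) = 0 → (∀ ζ ∈ capCap n θ, 0 < h ζ - ⟪ζ, z⟫) →
      ‖z - z₀‖ < r → ∃ w : V n, w (Fin.last n) = 0 ∧ (∀ ζ ∈ capCap n θ, 0 < h ζ - ⟪ζ, w⟫) ∧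
        entropy ψ n θ h w ≤ entropy ψ n θ h z - δ := by
  have hc := cos_nonneg_of_mem hθ
  obtain ⟨v, hvl, hv0, hvK, hvT⟩ := exists_outer_normal hc hpos hh hK0 hK hz₀ hne
  have hvn : 0 < ‖v‖ := norm_pos_iff.2 hv0
  obtain ⟨c₁, hc₁, hcle⟩ := exists_pos_le_capCap (f := fun ζ => h ζ - ⟪ζ, z₀⟫)
    (hh.sub (by fun_prop)) (S := {ζ | ⟪ζ, v⟫ ≤ 0}) (isClosed_le (by fun_prop) continuous_const)
    fun ζ hζ => (hnn ζ hζ.1).lt_of_ne' fun h0 => not_lt.2 hζ.2 (hvT ζ hζ.1 h0)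
  set c := c₁ / 2 with hcdef
  have hc0 : 0 < c := by positivity
  have hJ := integral_truncDeriv_neg hψ hθ hh hK hsupp hz₀ hne hvl hv0 hvK hvT hc0
    fun ζ hζ ha => by linarith [hcle ζ ⟨hζ, ha⟩]
  set J : V n → ℝ := fun z => ∫ ζ in capCap n θ,
    truncDeriv ψ c (h ζ - ⟪ζ, z⟫) * ⟪ζ, v⟫ ∂μH[(n : ℝ)] with hJdef
  have hJc : Continuous J := continuous_integral_truncDeriv hψ hc hh hc0 (by fun_prop)
  obtain ⟨r₁, hr₁, hball⟩ := Metric.eventually_nhds_iff.1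
    (hJc.continuousAt.eventually (gt_mem_nhds (show J z₀ < J z₀ / 2 by linarith)))
  set r := min r₁ (c / 2) with hr
  have hr0 : 0 < r := lt_min hr₁ (by positivity)
  have hlow : ∀ z : V n, ‖z - z₀‖ < r → ∀ ζ ∈ capCap n θ, ⟪ζ, v⟫ ≤ 0 → c ≤ h ζ - ⟪ζ, z⟫ := by
    intro z hz ζ hζ ha
    have h1 := hcle ζ ⟨hζ, ha⟩
    have h2 : ⟪ζ, z - z₀⟫ ≤ 2 * (c / 2) :=
      (real_inner_le_norm _ _).trans (mul_le_mul (norm_le_two_of_mem_capCap hc hζ)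
        (hz.le.trans (min_le_right _ _)) (norm_nonneg _) zero_le_two)
    rw [inner_sub_right] at h2
    linarith
  set t := r / (2 * ‖v‖) with ht
  have ht0 : 0 < t := by positivity
  refine ⟨r / 2, by positivity, t * (-(J z₀ / 2)), mul_pos ht0 (by linarith),
    fun z hzl hz hzr => ?_⟩
  have hwr : ‖z - t • v - z₀‖ < r := by
    have h1 : ‖t • v‖ = r / 2 := by
      rw [norm_smul, Real.norm_eq_abs, abs_of_pos ht0, ht]; field_simp
    calc ‖z - t • v - z₀‖ = ‖(z - z₀) - t • v‖ := by congr 1; abel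
      _ ≤ ‖z - z₀‖ + ‖t • v‖ := norm_sub_le _ _
      _ < r := by rw [h1]; linarith
  have hw : ∀ ζ ∈ capCap n θ, 0 < h ζ - ⟪ζ, z - t • v⟫ := by
    intro ζ hζ
    rcases le_total ⟪ζ, v⟫ 0 with ha | ha
    · exact hc0.trans_le (hlow _ hwr ζ hζ ha)
    · rw [inner_sub_right, inner_smul_right]
      nlinarith [hz ζ hζ, mul_nonneg ht0.le ha]
  refine ⟨z - t • v, by simp [hzl, hvl], hw, ?_⟩
  have h1 := entropy_sub_le hψ hc hh hw hz
  have h2 : ∫ ζ in capCap n θ, deriv ψ (h ζ - ⟪ζ, z - t • v⟫) * ⟪ζ, z - (z - t • v)⟫ ∂μH[(n : ℝ)]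
      ≤ t * J (z - t • v) := by
    rw [hJdef, ← integral_const_mul]
    refine setIntegral_mono_on (integrableOn_capCap hc
      ((continuousOn_deriv_defect hψ hh hw).mul (by fun_prop))) (integrableOn_capCap hc
        (continuousOn_const.mul (((hψ.continuous_truncDeriv hc0).comp_continuousOn
          (hh.sub (by fun_prop))).mul (by fun_prop)))) measurableSet_capCap fun ζ hζ => ?_
    rw [sub_sub_cancel, inner_smul_right, mul_left_comm]
    refine mul_le_mul_of_nonneg_left ?_ ht0.le
    rcases le_total ⟪ζ, v⟫ 0 with ha | ha
    · rw [truncDeriv_of_le (hlow _ hwr ζ hζ ha)]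
    · exact mul_le_mul_of_nonneg_right (hψ.deriv_le_truncDeriv hc0 (hw ζ hζ)) ha
  have h3 : J (z - t • v) < J z₀ / 2 :=
    hball (by rw [dist_eq_norm]; exact hwr.trans_le (min_le_left _ _))
  nlinarith [mul_lt_mul_of_pos_left h3 ht0]

theorem exists_entropy_minimizer (hψ : PsiOK ψ) (hθ : θ ∈ Ioc 0 (π / 2))
    (hpos : ∀ ζ ∈ capCap n θ, 0 < h ζ)
    (hh : ContinuousOn h (capCap n θ)) {K : Set (V n)} (hKc : IsCompact K)
    (hK0 : ∀ y ∈ K, 0 ≤ y (Fin.last n))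
    (hK : ∀ y ∈ K, ∀ ζ ∈ capCap n θ, ⟪ζ + cos θ • Etop n, y⟫ ≤ h ζ)
    (hsupp : ∀ ζ ∈ capCap n θ, ∃ y ∈ K, ⟪ζ + cos θ • Etop n, y⟫ = h ζ)
    (hKz : ∀ z : V n, z (Fin.last n) = 0 → (∀ ζ ∈ capCap n θ, 0 < h ζ - ⟪ζ, z⟫) → z ∈ K) :
    ∃ z : V n, z (Fin.last n) = 0 ∧ (∀ ζ ∈ capCap n θ, 0 < h ζ - ⟪ζ, z⟫) ∧
      ∀ w : V n, w (Fin.last n) = 0 → (∀ ζ ∈ capCap n θ, 0 < h ζ - ⟪ζ, w⟫) →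
        entropy ψ n θ h z ≤ entropy ψ n θ h w := by
  have hc := cos_nonneg_of_mem hθ
  set Ω : Set (V n) := {z | z (Fin.last n) = 0 ∧ ∀ ζ ∈ capCap n θ, 0 < h ζ - ⟪ζ, z⟫} with hΩ
  have h0Ω : (0 : V n) ∈ Ω := ⟨rfl, by simpa using hpos⟩
  have hcont : ∀ z ∈ Ω, Continuous fun w : V n => ∫ ζ in capCap n θ,
      deriv ψ (h ζ - ⟪ζ, z⟫) * ⟪ζ, w - z⟫ ∂μH[(n : ℝ)] := fun z hz => by
    refine continuous_setIntegral_capCap hc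
      (F := fun w ζ => deriv ψ (h ζ - ⟪ζ, z⟫) * ⟪ζ, w - z⟫) ?_
    refine ((continuousOn_deriv_defect hψ hh hz.2).comp continuousOn_snd fun p hp => hp.2).mul ?_
    exact (continuous_snd.inner (continuous_fst.sub continuous_const)).continuousOn
  have hbdd : BddBelow (entropy ψ n θ h '' Ω) := by
    obtain ⟨M, hM⟩ := (hKc.image (hcont 0 h0Ω)).bddAbove
    refine ⟨entropy ψ n θ h 0 - M, ?_⟩
    rintro _ ⟨z, hz, rfl⟩
    have h1 := entropy_sub_le hψ hc hh h0Ω.2 hz.2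
    have h2 := hM (mem_image_of_mem _ (hKz z hz.1 hz.2))
    simp only at h2
    linarith
  obtain ⟨a, -, ha, haΩ⟩ := exists_seq_tendsto_sInf (Set.Nonempty.image _ ⟨0, h0Ω⟩) hbdd
  choose x hxΩ hxa using haΩ
  obtain ⟨z₀, hz₀K, φ, hφ, hlim⟩ := hKc.tendsto_subseq fun k => hKz (x k) (hxΩ k).1 (hxΩ k).2
  have hlim' : Filter.Tendsto (fun k => entropy ψ n θ h (x (φ k))) Filter.atTop
      (nhds (sInf (entropy ψ n θ h '' Ω))) := by
    simp_rw [hxa]; exact ha.comp hφ.tendsto_atTop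
  have hz₀l : z₀ (Fin.last n) = 0 := by
    refine tendsto_nhds_unique (((continuous_apply_coord _).tendsto z₀).comp hlim) ?_
    refine tendsto_const_nhds.congr fun k => ?_
    exact (hxΩ (φ k)).1.symm
  have hnn : ∀ ζ ∈ capCap n θ, 0 ≤ h ζ - ⟪ζ, z₀⟫ := fun ζ hζ => by
    have := hK z₀ hz₀K ζ hζ
    rw [inner_add_Etop hz₀l] at this
    linarith
  by_cases hne : ∃ ζ ∈ capCap n θ, h ζ - ⟪ζ, z₀⟫ = 0
  · exfalso
    obtain ⟨r, hr, δ, hδ, hdesc⟩ :=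
      exists_entropy_descent hψ hθ hpos hh hK0 hK hsupp hz₀l hnn hne
    have e1 := hlim.eventually (Metric.ball_mem_nhds z₀ hr)
    have e2 := hlim'.eventually (gt_mem_nhds (lt_add_of_pos_right _ hδ))
    obtain ⟨k, hk1, hk2⟩ := (e1.and e2).exists
    obtain ⟨w, hwl, hw, hle⟩ := hdesc (x (φ k)) (hxΩ _).1 (hxΩ _).2
      (by rw [← dist_eq_norm]; exact hk1)
    have := csInf_le hbdd (mem_image_of_mem _ (show w ∈ Ω from ⟨hwl, hw⟩))
    linarith
  · push Not at hne
    have hz₀ : z₀ ∈ Ω := ⟨hz₀l, fun ζ hζ => (hnn ζ hζ).lt_of_ne' (hne ζ hζ)⟩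
    refine ⟨z₀, hz₀l, hz₀.2, fun w hwl hw => ?_⟩
    refine le_trans ?_ (csInf_le hbdd (mem_image_of_mem _ (show w ∈ Ω from ⟨hwl, hw⟩)))
    have h1 := ((hcont z₀ hz₀).tendsto z₀).comp hlim
    simp only [sub_self, inner_zero_right, mul_zero, integral_zero] at h1
    have h2 := le_of_tendsto_of_tendsto' (tendsto_const_nhds.sub hlim') h1 fun k =>
      entropy_sub_le hψ hc hh hz₀.2 (hxΩ (φ k)).2
    linarith

theorem integral_deriv_eq_zero_of_minimizer (hψ : PsiOK ψ) (hc : 0 ≤ cos θ)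
    (hh : ContinuousOn h (capCap n θ)) {z : V n} (hzl : z (Fin.last n) = 0)
    (hz : ∀ ζ ∈ capCap n θ, 0 < h ζ - ⟪ζ, z⟫)
    (hmin : ∀ w : V n, w (Fin.last n) = 0 → (∀ ζ ∈ capCap n θ, 0 < h ζ - ⟪ζ, w⟫) →
      entropy ψ n θ h z ≤ entropy ψ n θ h w) {i : Fin (n + 1)} (hi : i ≠ Fin.last n) :
    ∫ ζ in capCap n θ, deriv ψ (h ζ - ⟪ζ, z⟫) * ζ i ∂μH[(n : ℝ)] = 0 := by
  obtain ⟨c₁, hc₁, hcle⟩ := exists_pos_le_capCap (f := fun ζ => h ζ - ⟪ζ, z⟫)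
    (hh.sub (by fun_prop)) isClosed_univ fun ζ hζ => hz ζ hζ.1
  set c := c₁ / 2 with hcdef
  have hc0 : 0 < c := by positivity
  set e : V n := EuclideanSpace.single i 1 with he
  have hel : e (Fin.last n) = 0 := by simp [he, hi.symm]
  have hen : ‖e‖ = 1 := by simp [he]
  have hei : ∀ ζ : V n, ⟪ζ, e⟫ = ζ i := fun ζ => by simp [he, EuclideanSpace.inner_single_right]
  set G : ℝ → ℝ := fun s => ∫ ζ in capCap n θ,
    truncDeriv ψ c (h ζ - ⟪ζ, z + s • e⟫) * ζ i ∂μH[(n : ℝ)] with hG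
  have hGc : Continuous G :=
    (continuous_integral_truncDeriv hψ hc hh hc0 (continuous_apply_coord i)).comp
      (f := fun s : ℝ => z + s • e) (by fun_prop)
  have hG0 : G 0 = ∫ ζ in capCap n θ, deriv ψ (h ζ - ⟪ζ, z⟫) * ζ i ∂μH[(n : ℝ)] := by
    refine setIntegral_congr_fun measurableSet_capCap fun ζ hζ => ?_
    have := hcle ζ ⟨hζ, mem_univ _⟩
    simp only [zero_smul, add_zero]
    rw [truncDeriv_of_le (by linarith)]
  have hsG : ∀ s : ℝ, |s| < c / 2 → s * G s ≤ 0 := by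
    intro s hs
    have hlow : ∀ ζ ∈ capCap n θ, c ≤ h ζ - ⟪ζ, z + s • e⟫ := by
      intro ζ hζ
      have h1 := hcle ζ ⟨hζ, mem_univ _⟩
      have h2 : ⟪ζ, s • e⟫ ≤ 2 * (c / 2) := by
        refine (real_inner_le_norm _ _).trans (mul_le_mul (norm_le_two_of_mem_capCap hc hζ) ?_
          (norm_nonneg _) zero_le_two)
        rw [norm_smul, hen, mul_one, Real.norm_eq_abs]; exact hs.le
      rw [inner_add_right]
      linarith
    have hw : ∀ ζ ∈ capCap n θ, 0 < h ζ - ⟪ζ, z + s • e⟫ := fun ζ hζ => hc0.trans_le (hlow ζ hζ)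
    have h1 := hmin (z + s • e) (by simp [hzl, hel]) hw
    have h2 := entropy_sub_le hψ hc hh hw hz
    have h3 : ∫ ζ in capCap n θ,
        deriv ψ (h ζ - ⟪ζ, z + s • e⟫) * ⟪ζ, z - (z + s • e)⟫ ∂μH[(n : ℝ)] = -s * G s := by
      rw [hG, ← integral_const_mul]
      refine setIntegral_congr_fun measurableSet_capCap fun ζ hζ => ?_
      simp only [sub_add_cancel_left, inner_neg_right, inner_smul_right, hei]
      rw [truncDeriv_of_le (hlow ζ hζ)]; ring
    linarith
  rw [← hG0]
  refine le_antisymm ?_ ?_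
  · refine le_of_tendsto (hGc.continuousWithinAt (s := Ioi 0) (x := 0)) ?_
    filter_upwards [Ioo_mem_nhdsGT (show (0 : ℝ) < c / 2 by positivity)] with s hs
    have := hsG s (by rw [abs_of_pos hs.1]; exact hs.2)
    exact nonpos_of_mul_nonpos_right this hs.1
  · refine ge_of_tendsto (hGc.continuousWithinAt (s := Iio 0) (x := 0)) ?_
    filter_upwards [Ioo_mem_nhdsLT (show -(c / 2) < (0 : ℝ) by linarith)] with s hs
    have := hsG s (by rw [abs_of_neg hs.2]; linarith [hs.1])
    exact nonneg_of_mul_nonpos_right this hs.2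

theorem entropy_point_unique (hψ : PsiOK ψ) (hθ : θ ∈ Ioc 0 (π / 2))
    (hh : ContinuousOn h (capCap n θ)) {z w : V n} (hzl : z (Fin.last n) = 0)
    (hz : ∀ ζ ∈ capCap n θ, 0 < h ζ - ⟪ζ, z⟫) (hwl : w (Fin.last n) = 0)
    (hw : ∀ ζ ∈ capCap n θ, 0 < h ζ - ⟪ζ, w⟫)
    (hz0 : ∀ i : Fin (n + 1), i ≠ Fin.last n →
      ∫ ζ in capCap n θ, deriv ψ (h ζ - ⟪ζ, z⟫) * ζ i ∂μH[(n : ℝ)] = 0)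
    (hw0 : ∀ i : Fin (n + 1), i ≠ Fin.last n →
      ∫ ζ in capCap n θ, deriv ψ (h ζ - ⟪ζ, w⟫) * ζ i ∂μH[(n : ℝ)] = 0) : z = w := by
  by_contra hne
  have hc := cos_nonneg_of_mem hθ
  have hsin := sin_pos_of_mem hθ
  set p := w - z with hp
  have hpl : p (Fin.last n) = 0 := by simp [hp, hzl, hwl]
  have hp0 : 0 < ‖p‖ := norm_pos_iff.2 (sub_ne_zero.2 (Ne.symm hne))
  have hcz := continuousOn_deriv_defect hψ hh hz
  have hcw := continuousOn_deriv_defect hψ hh hw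
  have hcp : ContinuousOn (fun ζ : V n => ⟪ζ, p⟫) (capCap n θ) := by fun_prop
  have hdef : ∀ ζ : V n, ⟪ζ, p⟫ = (h ζ - ⟪ζ, z⟫) - (h ζ - ⟪ζ, w⟫) := fun ζ => by
    rw [hp, inner_sub_right]; ring
  set ζ₀ : V n := (sin θ * ‖p‖⁻¹) • p with hζ₀
  have hζ₀C : ζ₀ ∈ capCap n θ := by
    have hb := smul_add_mem_sphCapBdry (θ := θ) (e := ‖p‖⁻¹ • p)
      (by rw [norm_smul, norm_inv, norm_norm, inv_mul_cancel₀ hp0.ne']) (by simp [hpl])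
    rw [smul_smul] at hb
    exact (mem_capCap_iff ζ₀).2 ⟨hb.1, hb.2.ge⟩
  have hζ₀p : 0 < ⟪ζ₀, p⟫ := by
    rw [hζ₀, real_inner_smul_left, real_inner_self_eq_norm_sq]; positivity
  have hA : ContinuousOn (fun ζ => deriv ψ (h ζ - ⟪ζ, z⟫) * ⟪ζ, p⟫) (capCap n θ) := hcz.mul hcp
  have hB : ContinuousOn (fun ζ => deriv ψ (h ζ - ⟪ζ, w⟫) * ⟪ζ, p⟫) (capCap n θ) := hcw.mul hcp
  have hpos := setIntegral_capCap_pos (f := fun ζ => deriv ψ (h ζ - ⟪ζ, z⟫) * ⟪ζ, p⟫ -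
    deriv ψ (h ζ - ⟪ζ, w⟫) * ⟪ζ, p⟫) hθ (hA.sub hB) (fun ζ hζ => ?_) hζ₀C ?_
  · rw [integral_sub (integrableOn_capCap hc hA) (integrableOn_capCap hc hB), integral_mul_inner_eq_zero hc hcz hz0 hpl,
      integral_mul_inner_eq_zero hc hcw hw0 hpl] at hpos
    simp at hpos
  · rw [← sub_mul]
    have hd := hdef ζ
    rcases le_total 0 ⟪ζ, p⟫ with ha | ha
    · exact mul_nonneg (sub_nonneg.2 (hψ.strictMonoOn_deriv.monotoneOn (hw ζ hζ) (hz ζ hζ)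
        (by linarith))) ha
    · exact mul_nonneg_of_nonpos_of_nonpos (sub_nonpos.2 (hψ.strictMonoOn_deriv.monotoneOn
        (hz ζ hζ) (hw ζ hζ) (by linarith))) ha
  · rw [← sub_mul]
    have hd := hdef ζ₀
    exact mul_pos (sub_pos.2 (hψ.strictMonoOn_deriv (hw ζ₀ hζ₀C) (hz ζ₀ hζ₀C) (by linarith))) hζ₀p

end Entropy

/-- a nonnegative capillary function with `τ ≥ 0` is the capillary support
function of a capillary convex set, and existence/uniqueness of its entropy point. -/
theorem capillary_entropy_point_general (ψ : ℝ → ℝ) (hψ : PsiOK ψ) (n : ℕ) (hn : 1 ≤ n)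
    (θ : ℝ) (hθ : θ ∈ Ioc 0 (π / 2))
    (h H : V n → ℝ) (hext : IsHomExt n θ 3 h H) (hcap : IsCapillaryF n θ H)
    (hτ : TauNonneg n θ H) (hpos : ∀ ζ ∈ capCap n θ, 0 < h ζ) :
    ∃ K : Set (V n), IsCompact K ∧ Convex ℝ K ∧ (interior K).Nonempty ∧
      (∀ x ∈ K, 0 ≤ x (Fin.last n)) ∧ (relintBase n K).Nonempty ∧
      (∀ ζ ∈ capCap n θ, suppFn n K (ζ + Real.cos θ • Etop n) = h ζ) ∧
      (∃! z : V n, z ∈ relintBase n K ∧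
        ∀ i : Fin (n + 1), i ≠ Fin.last n →
          ∫ ζ in capCap n θ, deriv ψ (h ζ - ⟪ζ, z⟫) * ζ i ∂μH[(n : ℝ)] = 0) ∧
      (∀ z : V n, z ∈ relintBase n K →
        (∀ i : Fin (n + 1), i ≠ Fin.last n →
          ∫ ζ in capCap n θ, deriv ψ (h ζ - ⟪ζ, z⟫) * ζ i ∂μH[(n : ℝ)] = 0) →
        ∀ ζ ∈ capCap n θ, 0 < h ζ - ⟪ζ, z⟫) := by
  have hc := cos_nonneg_of_mem hθ
  have hHζ := hext.2.2
  have hHc := hext.continuousOn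
  have hposH : ∀ u ∈ sphCap n θ, 0 < H u := fun u hu => by
    have h1 := hHζ _ (sub_mem_capCap hu)
    rw [sub_add_cancel] at h1
    exact h1 ▸ hpos _ (sub_mem_capCap hu)
  have hh : ContinuousOn h (capCap n θ) :=
    (hHc.comp (f := fun ζ : V n => ζ + Real.cos θ • Etop n) (by fun_prop)
      fun ζ hζ => (mem_capCap_iff ζ).1 hζ).congr fun ζ hζ => (hHζ ζ hζ).symm
  have hrel : ∀ z : V n, z ∈ relintBase n (wulff n θ H) ↔
      z (Fin.last n) = 0 ∧ ∀ ζ ∈ capCap n θ, 0 < h ζ - ⟪ζ, z⟫ := fun z => by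
    rw [mem_relintBase_wulff_iff hn hHc hposH]
    refine and_congr_right fun hz => ⟨fun hp ζ hζ => ?_, fun hp u hu => ?_⟩
    · have := hp _ ((mem_capCap_iff ζ).1 hζ)
      rwa [hHζ ζ hζ, inner_add_Etop hz] at this
    · have := hp _ (sub_mem_capCap hu)
      rwa [← hHζ _ (sub_mem_capCap hu), ← inner_add_Etop (θ := θ) hz, sub_add_cancel] at this
  have hsupp : ∀ ζ ∈ capCap n θ, ∃ y ∈ wulff n θ H,
      ⟪ζ + Real.cos θ • Etop n, y⟫ = H (ζ + Real.cos θ • Etop n) := fun ζ hζ =>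
    hext.exists_mem_wulff hcap hτ hn hθ hposH ((mem_capCap_iff ζ).1 hζ)
  refine ⟨wulff n θ H, isCompact_wulff hn hθ hHc, convex_wulff,
    interior_wulff_nonempty hHc hposH, fun x hx => hx.1,
    ⟨0, zero_mem_relintBase_wulff hHc hposH⟩, fun ζ hζ => ?_, ?_,
    fun z hz _ => ((hrel z).1 hz).2⟩
  · rw [suppFn_wulff ((mem_capCap_iff ζ).1 hζ) (hsupp ζ hζ), hHζ ζ hζ]
  · obtain ⟨z, hzl, hz, hmin⟩ := exists_entropy_minimizer hψ hθ hpos hh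
      (isCompact_wulff hn hθ hHc) (fun y hy => hy.1)
      (fun y hy ζ hζ => (hy.2 _ ((mem_capCap_iff ζ).1 hζ)).trans_eq (hHζ ζ hζ))
      (fun ζ hζ => (hsupp ζ hζ).imp fun y hy => ⟨hy.1, hy.2.trans (hHζ ζ hζ)⟩)
      fun z hzl hz => by
        obtain ⟨-, ε, hε, hball⟩ := (hrel z).2 ⟨hzl, hz⟩
        exact hball z hzl (by simpa using hε)
    have hz0 := fun (i : Fin (n + 1)) (hi : i ≠ Fin.last n) =>
      integral_deriv_eq_zero_of_minimizer hψ hc hh hzl hz hmin hi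
    refine ⟨z, ⟨(hrel z).2 ⟨hzl, hz⟩, hz0⟩, fun w hw => ?_⟩
    obtain ⟨hwl, hw'⟩ := (hrel w).1 hw.1
    exact entropy_point_unique hψ hθ hh hwl hw' hzl hz hw.2 hz0
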